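/- Let X ∈ C^{1-κ}(𝕋²) and Z ∈ C^{-κ}(𝕋²). The Anderson form 𝔞(u₁,u₂) = ∫∇v₁·∇v₂ e^{2X} dx - ⟨Z, v₁v₂ e^{2X}⟩ + c∫v₁v₂ e^{2X} dx, where v_i = e^{-X}u_i and c ∈ ℝ, is continuous on its domain D(𝔞) = e^X H¹ equipped with the norm ‖u‖_𝔞² = ‖u‖_{L²}² + ‖e^{-X}u‖_{H¹}²: there exists C > 0 with |𝔞(u₁,u₂)| ≤ C‖u₁‖_𝔞 ‖u₂‖_𝔞. -/

import Mathlib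

open MeasureTheory Complex Filter Topology ENNReal

noncomputable section

/-- fundamental domain of the torus `𝕋^d = (ℝ/2πℤ)^d` -/
def box (d : ℕ) : Set (Fin d → ℝ) := Set.univ.pi fun _ => Set.Ico 0 (2 * Real.pi)

/-- Lebesgue measure on the torus, realized on the fundamental domain -/
def μbox (d : ℕ) : Measure (Fin d → ℝ) := volume.restrict (box d)

/-- Euclidean norm of a frequency `k ∈ ℤ^d` -/
def knorm {d : ℕ} (k : Fin d → ℤ) : ℝ := Real.sqrt (∑ i, ((k i : ℝ)) ^ 2)

/-- the character `e^{i k·x}` on the torus -/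
def char {d : ℕ} (k : Fin d → ℤ) (x : Fin d → ℝ) : ℂ :=
  Complex.exp (Complex.I * ((∑ i, (k i : ℝ) * x i : ℝ) : ℂ))

/-- realization of a Fourier coefficient sequence as a function/distribution -/
def realize {d : ℕ} (c : (Fin d → ℤ) → ℂ) (x : Fin d → ℝ) : ℂ := ∑' k, c k * char k x

/-- sharp Littlewood–Paley block: frequencies in the annulus `2^{n-1} ≤ |k| < 2^n`
(ball `|k| < 1` for `n = 0`) -/
def lpBlock {d : ℕ} (n : ℕ) (c : (Fin d → ℤ) → ℂ) : (Fin d → ℤ) → ℂ := fun k =>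
  if n = 0 then (if knorm k < 1 then c k else 0)
  else if (2 : ℝ) ^ (n - 1) ≤ knorm k ∧ knorm k < 2 ^ n then c k else 0

/-- `L^p(𝕋^d)` norm of the `n`-th Littlewood–Paley block -/
def blockLp {d : ℕ} (n : ℕ) (p : ℝ≥0∞) (c : (Fin d → ℤ) → ℂ) : ℝ≥0∞ :=
  eLpNorm (realize (lpBlock n c)) p (μbox d)

/-- the Besov norm `B^α_{p,q}(𝕋^d)`: `ℓ^q` norm over `n` of `2^{αn} ‖Δ_n u‖_{L^p}` -/
def besovNorm {d : ℕ} (α : ℝ) (p q : ℝ≥0∞) (c : (Fin d → ℤ) → ℂ) : ℝ≥0∞ :=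
  if q = ∞ then ⨆ n : ℕ, (2 : ℝ≥0∞) ^ (α * (n : ℝ)) * blockLp n p c
  else (∑' n : ℕ, ((2 : ℝ≥0∞) ^ (α * (n : ℝ)) * blockLp n p c) ^ q.toReal) ^ (1 / q.toReal)

/-- the product of distributions, as convolution of Fourier coefficients -/
def convC {d : ℕ} (a b : (Fin d → ℤ) → ℂ) : (Fin d → ℤ) → ℂ := fun k => ∑' j, a j * b (k - j)

/-- the duality pairing `⟨u, v⟩ = Σ_k û(k) v̂(-k)` -/
def pairC {d : ℕ} (a b : (Fin d → ℤ) → ℂ) : ℂ := ∑' k : Fin d → ℤ, a k * b (-k)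

/-- Fourier coefficients of a function on the torus -/
def coeffC {d : ℕ} (f : (Fin d → ℝ) → ℂ) (k : Fin d → ℤ) : ℂ :=
  (((2 * Real.pi) ^ d : ℝ) : ℂ)⁻¹ * ∫ x in box d, f x * (starRingEnd ℂ) (char k x)

/-- squared Sobolev norm `‖·‖_{H^s(𝕋^d)}²` of a Fourier coefficient sequence -/
def sobSq {d : ℕ} (s : ℝ) (c : (Fin d → ℤ) → ℂ) : ℝ≥0∞ :=
  ∑' k, ENNReal.ofReal ((1 + knorm k ^ 2) ^ s) * ((‖c k‖₊ : ℝ≥0∞)) ^ 2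

/-- squared `L²(𝕋^d)` norm of a Fourier coefficient sequence -/
def l2Sq {d : ℕ} (c : (Fin d → ℤ) → ℂ) : ℝ≥0∞ := ∑' k, ((‖c k‖₊ : ℝ≥0∞)) ^ 2

/-- `j`-th partial derivative at the level of Fourier coefficients -/
def gradC {d : ℕ} (j : Fin d) (a : (Fin d → ℤ) → ℂ) : (Fin d → ℤ) → ℂ :=
  fun k => Complex.I * (k j : ℂ) * a k

/-- Fourier coefficients of `e^X` -/
def EXc {d : ℕ} (X : (Fin d → ℝ) → ℝ) : (Fin d → ℤ) → ℂ :=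
  coeffC fun x => (Real.exp (X x) : ℂ)

/-- Fourier coefficients of `e^{2X}` -/
def E2Xc {d : ℕ} (X : (Fin d → ℝ) → ℝ) : (Fin d → ℤ) → ℂ :=
  coeffC fun x => (Real.exp (2 * X x) : ℂ)

/-- the Anderson form
`𝔞(u₁,u₂) = ∫ ∇v₁·∇v₂ e^{2X} dx - ⟨Z, v₁v₂ e^{2X}⟩ + c ∫ v₁v₂ e^{2X} dx`,
expressed spectrally through the Fourier coefficients `a₁, a₂` of `v₁, v₂`
(all integrals `∫ fg` are computed as `Σ_k f̂(k) ĝ(-k)`, which rescales the form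
by the harmless constant `(2π)^{-2}`). -/
def aForm (X : (Fin 2 → ℝ) → ℝ) (Z : (Fin 2 → ℤ) → ℂ) (c : ℝ)
    (a₁ a₂ : (Fin 2 → ℤ) → ℂ) : ℂ :=
  (∑ j : Fin 2, pairC (convC (gradC j a₁) (gradC j a₂)) (E2Xc X))
    - pairC (convC a₁ a₂) (convC Z (E2Xc X))
    + (c : ℂ) * pairC (convC a₁ a₂) (E2Xc X)

/-- `(2π)`-periodicity in each coordinate -/
def periodicT {d : ℕ} (f : (Fin d → ℝ) → ℝ) : Prop :=
  ∀ (x : Fin d → ℝ) (i : Fin d),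
    f (fun j => x j + if j = i then 2 * Real.pi else 0) = f x

/-- squared form-domain norm `‖u‖_𝔞² = ‖u‖_{L²}² + ‖e^{-X}u‖_{H¹}²` of `u = e^X v`,
through the Fourier coefficients `a` of `v`. -/
def anormSq (X : (Fin 2 → ℝ) → ℝ) (a : (Fin 2 → ℤ) → ℂ) : ℝ≥0∞ :=
  l2Sq (convC (EXc X) a) + sobSq 1 a

/-!
The form is bounded on `H¹` term by term. In the gradient and mass terms `∇v₁ · ∇v₂` and `v₁ v₂` are
products of `L²` functions, tested against the bounded function `e^{2X}`. In the potential term, two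
`H¹` functions on the two-dimensional torus have a product in `H^t` for every `t < 1`; multiplying
it by `e^{2X} ∈ H^r` leaves it in `H^s` if `s < r` and `t` is close to `1`, and `H^s` is dual to
`H^{-s} ∋ Z`. These product estimates are Cauchy–Schwarz for convolutions of Fourier coefficients,
and `B^α_{∞,∞} ⊆ H^s` for `s < α` turns the Besov hypotheses into Sobolev ones.

That `e^{2X}` inherits the Sobolev regularity of `X` is a Lipschitz composition, which the Fourier
norm does not see. It is therefore compared with an `L²` difference-quotient norm, sampled at the
coordinate shifts by `2⁻ⁿ`: by Parseval each such difference multiplies the `k`-th coefficient by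
`e^{i k_i 2⁻ⁿ} - 1`, which is bounded below at the scale `2ⁿ ≈ |k_i|`.
-/

/-! ### Sobolev products on the Fourier side -/

section ENNRealSums

theorem tsum_sq_le_tsum_mul_tsum_of_sq_eq_mul {ι : Type*} {r f g : ι → ℝ≥0∞}
    (h : ∀ i, r i ^ 2 = f i * g i) : (∑' i, r i) ^ 2 ≤ (∑' i, f i) * ∑' i, g i := by
  let _ : MeasurableSpace ι := ⊤
  have sq_sqrt (x : ℝ≥0∞) : (x ^ (1 / 2 : ℝ)) ^ (2 : ℝ) = x := by
    rw [← ENNReal.rpow_mul, one_div_mul_cancel two_ne_zero, ENNReal.rpow_one]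
  have hr (i : ι) : r i = f i ^ (1 / 2 : ℝ) * g i ^ (1 / 2 : ℝ) := by
    rw [← ENNReal.mul_rpow_of_nonneg _ _ (by positivity), ← h, ← ENNReal.rpow_two,
      ← ENNReal.rpow_mul, mul_one_div_cancel two_ne_zero, ENNReal.rpow_one]
  have holder := ENNReal.lintegral_mul_le_Lp_mul_Lq (μ := Measure.count)
    (f := fun i => f i ^ (1 / 2 : ℝ)) (g := fun i => g i ^ (1 / 2 : ℝ))
    Real.HolderConjugate.two_two measurable_from_top.aemeasurable
    measurable_from_top.aemeasurable
  simp only [Pi.mul_apply, lintegral_count, sq_sqrt, ← hr] at holder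
  calc (∑' i, r i) ^ 2 ≤ ((∑' i, f i) ^ (1 / 2 : ℝ) * (∑' i, g i) ^ (1 / 2 : ℝ)) ^ 2 := by gcongr
    _ = _ := by rw [mul_pow, ← ENNReal.rpow_two, ← ENNReal.rpow_two, sq_sqrt, sq_sqrt]

variable {G : Type*} [AddCommGroup G]

/-- The convolution of two `[0, ∞]`-valued functions on a discrete group; it dominates the
convolution of complex sequences without any summability assumption. -/
def convE (f g : G → ℝ≥0∞) (k : G) : ℝ≥0∞ := ∑' j, f j * g (k - j)

theorem tsum_convE (f g : G → ℝ≥0∞) : ∑' k, convE f g k = (∑' k, f k) * ∑' k, g k := by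
  simp only [convE]
  rw [ENNReal.tsum_comm, ← ENNReal.tsum_mul_right]
  refine tsum_congr fun j => ?_
  rw [ENNReal.tsum_mul_left, ← (Equiv.subRight j).tsum_eq g]
  rfl

theorem tsum_mul_convE_neg (f g h : G → ℝ≥0∞) :
    ∑' k, f k * convE g h (-k) = ∑' j, g j * convE f h (-j) := by
  simp only [convE, ← ENNReal.tsum_mul_left]
  rw [ENNReal.tsum_comm]
  refine tsum_congr fun j => tsum_congr fun k => ?_
  rw [mul_left_comm, neg_sub_left, neg_sub_left, add_comm]

end ENNRealSums

theorem enorm_convC_le {d : ℕ} (a b : (Fin d → ℤ) → ℂ) (k : Fin d → ℤ) :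
    ‖convC a b k‖ₑ ≤ convE (‖a ·‖ₑ) (‖b ·‖ₑ) k :=
  enorm_tsum_le_tsum_enorm.trans_eq (tsum_congr fun _ => enorm_mul _ _)

section SobolevWeights

variable {d : ℕ}

theorem knorm_sq (k : Fin d → ℤ) : knorm k ^ 2 = ∑ i, (k i : ℝ) ^ 2 :=
  Real.sq_sqrt (by positivity)

theorem knorm_neg (k : Fin d → ℤ) : knorm (-k) = knorm k := by
  simp [knorm]

theorem abs_le_knorm (k : Fin d → ℤ) (i : Fin d) : |(k i : ℝ)| ≤ knorm k :=
  Real.abs_le_sqrt <| Finset.single_le_sum (f := fun i => (k i : ℝ) ^ 2)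
    (fun _ _ => sq_nonneg _) (Finset.mem_univ i)

theorem one_add_knorm_sq_le (k l : Fin d → ℤ) :
    1 + knorm k ^ 2 ≤ 4 * max (1 + knorm l ^ 2) (1 + knorm (k - l) ^ 2) := by
  have parallelogram : knorm k ^ 2 ≤ 2 * knorm l ^ 2 + 2 * knorm (k - l) ^ 2 := by
    simp only [knorm_sq, Finset.mul_sum, ← Finset.sum_add_distrib]
    refine Finset.sum_le_sum fun i _ => ?_
    push_cast [Pi.sub_apply]
    nlinarith [sq_nonneg ((k i : ℝ) - 2 * l i)]
  linarith [le_max_left (1 + knorm l ^ 2) (1 + knorm (k - l) ^ 2),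
    le_max_right (1 + knorm l ^ 2) (1 + knorm (k - l) ^ 2)]

/-- The weight `(1 + |k|²)^s` of the squared `H^s` norm. -/
def sobW (s : ℝ) (k : Fin d → ℤ) : ℝ≥0∞ := ENNReal.ofReal ((1 + knorm k ^ 2) ^ s)

theorem sobSq_eq_tsum_sobW (s : ℝ) (c : (Fin d → ℤ) → ℂ) :
    sobSq s c = ∑' k, sobW s k * ‖c k‖ₑ ^ 2 := rfl

theorem sobW_zero (k : Fin d → ℤ) : sobW 0 k = 1 := by simp [sobW]

theorem sobW_one (k : Fin d → ℤ) : sobW 1 k = 1 + ∑ i, ‖(k i : ℂ)‖ₑ ^ 2 := by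
  have h (i : Fin d) : ‖(k i : ℂ)‖ₑ ^ 2 = ENNReal.ofReal ((k i : ℝ) ^ 2) := by
    rw [← ofReal_norm, ← ENNReal.ofReal_pow (norm_nonneg _), Complex.norm_intCast, sq_abs]
  simp only [h]
  rw [sobW, Real.rpow_one, knorm_sq, ENNReal.ofReal_add zero_le_one (by positivity),
    ENNReal.ofReal_one, ENNReal.ofReal_sum_of_nonneg fun _ _ => sq_nonneg _]

theorem sobW_add (s t : ℝ) (k : Fin d → ℤ) : sobW (s + t) k = sobW s k * sobW t k := by
  rw [sobW, sobW, sobW, ← ENNReal.ofReal_mul (by positivity), Real.rpow_add (by positivity)]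

theorem sobW_neg_mul_sobW (s : ℝ) (k : Fin d → ℤ) : sobW (-s) k * sobW s k = 1 := by
  rw [← sobW_add, neg_add_cancel, sobW_zero]

theorem sobW_neg_index (s : ℝ) (k : Fin d → ℤ) : sobW s (-k) = sobW s k := by
  rw [sobW, sobW, knorm_neg]

theorem sobW_mono (k : Fin d → ℤ) : Monotone fun s => sobW s k := fun _ _ h =>
  ENNReal.ofReal_le_ofReal (Real.rpow_le_rpow_of_exponent_le (by nlinarith [sq_nonneg (knorm k)]) h)

theorem sobSq_mono (c : (Fin d → ℤ) → ℂ) : Monotone fun s => sobSq s c := fun _ _ h =>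
  ENNReal.tsum_le_tsum fun k => mul_le_mul_left (sobW_mono k h) _

theorem summable_intCast_norm_rpow {r : ℝ} (hr : r < -d) :
    Summable fun k : Fin d → ℤ => ‖fun i => (k i : ℝ)‖ ^ r := by
  let b := (Pi.basisFun ℝ (Fin d)).restrictScalars ℤ
  have summable_lattice := ZLattice.summable_norm_rpow
    (Submodule.span ℤ (Set.range (Pi.basisFun ℝ (Fin d)))) r
    (by simpa [Module.finrank_eq_card_basis b] using hr)
  refine (summable_lattice.comp_injective b.equivFun.symm.injective).congr fun k => ?_
  have hk : (b.equivFun.symm k : Fin d → ℝ) = fun i => (k i : ℝ) := by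
    ext i
    simp [b, Module.Basis.equivFun_symm_apply, Module.Basis.restrictScalars_apply, Pi.single_apply]
  simp [← hk]

theorem tsum_sobW_neg_ne_top {p : ℝ} (hp : d / 2 < p) :
    ∑' k : Fin d → ℤ, sobW (-p) k ≠ ∞ := by
  have hp0 : 0 ≤ p := le_trans (by positivity) hp.le
  refine (Summable.of_norm_bounded_eventually
    (summable_intCast_norm_rpow (r := -(2 * p)) (by linarith)) ?_).tsum_ofReal_ne_top
  filter_upwards [(Set.finite_singleton (0 : Fin d → ℤ)).compl_mem_cofinite] with k hk
  have hpos : 0 < ‖fun i => (k i : ℝ)‖ := norm_pos_iff.mpr fun h =>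
    hk (funext fun i => by simpa using congrFun h i)
  have hle : ‖fun i => (k i : ℝ)‖ ≤ knorm k :=
    (pi_norm_le_iff_of_nonneg (Real.sqrt_nonneg _)).mpr (abs_le_knorm k)
  rw [Real.norm_of_nonneg (by positivity), ← mul_neg, Real.rpow_mul hpos.le, Real.rpow_two]
  exact Real.rpow_le_rpow_of_nonpos (by positivity) (by nlinarith) (by linarith)

/-- With `x`, `y`, `z` the weights `1 + |·|²` at `l`, `k - l`, `k`: the `t` derivatives are charged
to the larger of the two frequencies `l` and `k - l`, which is at least `|k| / 2`. -/
theorem rpow_mul_rpow_neg_mul_rpow_neg_le {x y z s₁ s₂ t : ℝ} (hx : 0 < x) (hy : 0 < y)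
    (hz : 0 ≤ z) (hxyz : z ≤ 4 * max x y) (ht : 0 ≤ t) (h₁ : t ≤ s₁) (h₂ : t ≤ s₂) :
    z ^ t * (x ^ (-s₁) * y ^ (-s₂)) ≤
      4 ^ t * (x ^ (-(s₁ + s₂ - t)) + y ^ (-(s₁ + s₂ - t))) := by
  wlog hxy : x ≤ y generalizing x y s₁ s₂
  · have := this hy hx (max_comm x y ▸ hxyz) h₂ h₁ (le_of_not_ge hxy)
    rwa [mul_comm (y ^ _), add_comm s₂, add_comm (y ^ _)] at this
  rw [max_eq_right hxy] at hxyz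
  calc z ^ t * (x ^ (-s₁) * y ^ (-s₂))
      ≤ (4 * y) ^ t * (x ^ (-s₁) * y ^ (-s₂)) := by gcongr
    _ = 4 ^ t * (x ^ (-s₁) * y ^ (t - s₂)) := by
        rw [Real.mul_rpow (by norm_num) hy.le, sub_eq_add_neg, Real.rpow_add hy]
        ring
    _ ≤ 4 ^ t * (x ^ (-s₁) * x ^ (t - s₂)) := by
        gcongr ?_ * (_ * ?_)
        exact Real.rpow_le_rpow_of_nonpos hx hxy (by linarith)
    _ = 4 ^ t * x ^ (-(s₁ + s₂ - t)) := by
        rw [← Real.rpow_add hx]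
        congr 2
        ring
    _ ≤ _ := by
        gcongr
        exact le_add_of_nonneg_right (by positivity)

theorem convE_sobW_neg_le {s₁ s₂ t : ℝ} (ht : 0 ≤ t) (h₁ : t ≤ s₁) (h₂ : t ≤ s₂)
    (k : Fin d → ℤ) :
    sobW t k * convE (sobW (-s₁)) (sobW (-s₂)) k ≤
      ENNReal.ofReal (4 ^ t) * (2 * ∑' l : Fin d → ℤ, sobW (-(s₁ + s₂ - t)) l) := by
  have kernel (l : Fin d → ℤ) : sobW t k * (sobW (-s₁) l * sobW (-s₂) (k - l)) ≤
      ENNReal.ofReal (4 ^ t) * (sobW (-(s₁ + s₂ - t)) l + sobW (-(s₁ + s₂ - t)) (k - l)) := by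
    simp only [sobW]
    rw [← ENNReal.ofReal_mul (by positivity), ← ENNReal.ofReal_mul (by positivity),
      ← ENNReal.ofReal_add (by positivity) (by positivity), ← ENNReal.ofReal_mul (by positivity)]
    exact ENNReal.ofReal_le_ofReal <| rpow_mul_rpow_neg_mul_rpow_neg_le (by positivity)
      (by positivity) (by positivity) (one_add_knorm_sq_le k l) ht h₁ h₂
  rw [convE, ← ENNReal.tsum_mul_left]
  refine (ENNReal.tsum_le_tsum kernel).trans_eq ?_
  rw [ENNReal.tsum_mul_left, ENNReal.tsum_add, two_mul]
  congr 2
  exact (Equiv.subLeft k).tsum_eq (sobW (-(s₁ + s₂ - t)))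

theorem convE_sq_le_convE_sobW (s₁ s₂ : ℝ) (f g : (Fin d → ℤ) → ℝ≥0∞) (k : Fin d → ℤ) :
    convE f g k ^ 2 ≤ convE (sobW (-s₁)) (sobW (-s₂)) k *
      convE (fun l => sobW s₁ l * f l ^ 2) (fun l => sobW s₂ l * g l ^ 2) k := by
  refine tsum_sq_le_tsum_mul_tsum_of_sq_eq_mul fun l => ?_
  calc (f l * g (k - l)) ^ 2
      = (sobW (-s₁) l * sobW s₁ l) * (sobW (-s₂) (k - l) * sobW s₂ (k - l)) *
          (f l * g (k - l)) ^ 2 := by simp only [sobW_neg_mul_sobW, one_mul]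
    _ = _ := by ring

theorem exists_tsum_sobW_mul_convE_sq_le {s₁ s₂ t : ℝ} (ht : 0 ≤ t) (h₁ : t ≤ s₁) (h₂ : t ≤ s₂)
    (h : d / 2 < s₁ + s₂ - t) :
    ∃ C : ℝ≥0∞, C ≠ ∞ ∧ ∀ f g : (Fin d → ℤ) → ℝ≥0∞,
      ∑' k, sobW t k * convE f g k ^ 2 ≤
        C * ((∑' k, sobW s₁ k * f k ^ 2) * ∑' k, sobW s₂ k * g k ^ 2) := by
  refine ⟨ENNReal.ofReal (4 ^ t) * (2 * ∑' l : Fin d → ℤ, sobW (-(s₁ + s₂ - t)) l),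
    ENNReal.mul_ne_top ENNReal.ofReal_ne_top <|
      ENNReal.mul_ne_top ENNReal.ofNat_ne_top (tsum_sobW_neg_ne_top h), fun f g => ?_⟩
  rw [← tsum_convE, ← ENNReal.tsum_mul_left]
  refine ENNReal.tsum_le_tsum fun k => ?_
  calc sobW t k * convE f g k ^ 2
      ≤ sobW t k * convE (sobW (-s₁)) (sobW (-s₂)) k * convE (fun l => sobW s₁ l * f l ^ 2)
          (fun l => sobW s₂ l * g l ^ 2) k := by
        rw [mul_assoc]
        gcongr
        exact convE_sq_le_convE_sobW s₁ s₂ f g k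
    _ ≤ _ := mul_le_mul_left (convE_sobW_neg_le ht h₁ h₂ k) _

theorem tsum_mul_neg_sq_le_sobW (s : ℝ) (f g : (Fin d → ℤ) → ℝ≥0∞) :
    (∑' k, f k * g (-k)) ^ 2 ≤ (∑' k, sobW (-s) k * f k ^ 2) * ∑' k, sobW s k * g k ^ 2 := by
  rw [← (Equiv.neg _).tsum_eq fun k => sobW s k * g k ^ 2]
  refine tsum_sq_le_tsum_mul_tsum_of_sq_eq_mul fun k => ?_
  simp only [Equiv.neg_apply, sobW_neg_index]
  calc (f k * g (-k)) ^ 2 = sobW (-s) k * sobW s k * (f k * g (-k)) ^ 2 := by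
        rw [sobW_neg_mul_sobW, one_mul]
    _ = _ := by ring

theorem enorm_pairC_convC_convC_le (a b z e : (Fin d → ℤ) → ℂ) :
    ‖pairC (convC a b) (convC z e)‖ₑ ≤
      ∑' k, ‖z k‖ₑ * convE (convE (‖a ·‖ₑ) (‖b ·‖ₑ)) (‖e ·‖ₑ) (-k) :=
  calc ‖pairC (convC a b) (convC z e)‖ₑ
      ≤ ∑' k, ‖convC a b k * convC z e (-k)‖ₑ := enorm_tsum_le_tsum_enorm
    _ ≤ ∑' k, convE (‖a ·‖ₑ) (‖b ·‖ₑ) k * convE (‖z ·‖ₑ) (‖e ·‖ₑ) (-k) :=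
        ENNReal.tsum_le_tsum fun k => (enorm_mul _ _).trans_le <|
          mul_le_mul' (enorm_convC_le a b k) (enorm_convC_le z e (-k))
    _ = _ := tsum_mul_convE_neg _ _ _

/-- Here `ab ∈ H^t` for `a ∈ H^{s₁}` and `b ∈ H^{s₂}`, so that `abe ∈ H^s` for `e ∈ H^r`, and this
is paired with `z ∈ H^{-s}`. -/
theorem exists_enorm_pairC_convC_convC_sq_le {s₁ s₂ t r s : ℝ} (hs : 0 ≤ s) (hst : s ≤ t)
    (hsr : s ≤ r) (h₁ : t ≤ s₁) (h₂ : t ≤ s₂) (h : d / 2 < s₁ + s₂ - t) (h' : d / 2 < t + r - s) :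
    ∃ C : ℝ≥0∞, C ≠ ∞ ∧ ∀ a b z e : (Fin d → ℤ) → ℂ,
      ‖pairC (convC a b) (convC z e)‖ₑ ^ 2 ≤
        C * (sobSq (-s) z * sobSq r e) * (sobSq s₁ a * sobSq s₂ b) := by
  obtain ⟨C₁, hC₁, H₁⟩ := exists_tsum_sobW_mul_convE_sq_le (hs.trans hst) h₁ h₂ h
  obtain ⟨C₂, hC₂, H₂⟩ := exists_tsum_sobW_mul_convE_sq_le hs hst hsr h'
  refine ⟨C₁ * C₂, ENNReal.mul_ne_top hC₁ hC₂, fun a b z e => ?_⟩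
  calc ‖pairC (convC a b) (convC z e)‖ₑ ^ 2
      ≤ (∑' k, ‖z k‖ₑ * convE (convE (‖a ·‖ₑ) (‖b ·‖ₑ)) (‖e ·‖ₑ) (-k)) ^ 2 := by
        gcongr
        exact enorm_pairC_convC_convC_le a b z e
    _ ≤ sobSq (-s) z * ∑' k, sobW s k * convE (convE (‖a ·‖ₑ) (‖b ·‖ₑ)) (‖e ·‖ₑ) k ^ 2 :=
        tsum_mul_neg_sq_le_sobW s _ _
    _ ≤ sobSq (-s) z * (C₂ * (C₁ * (sobSq s₁ a * sobSq s₂ b) * sobSq r e)) := by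
        gcongr
        refine (H₂ _ _).trans ?_
        gcongr
        exacts [H₁ _ _, le_rfl]
    _ = _ := by ring

end SobolevWeights

/-! ### Periodic functions and the unit torus -/

section Torus

local instance : MeasureSpace UnitAddCircle := ⟨AddCircle.haarAddCircle⟩

local instance : Measure.IsAddHaarMeasure (volume : Measure UnitAddCircle) :=
  inferInstanceAs (Measure.IsAddHaarMeasure AddCircle.haarAddCircle)

local instance : IsProbabilityMeasure (volume : Measure UnitAddCircle) :=
  inferInstanceAs (IsProbabilityMeasure AddCircle.haarAddCircle)

open UnitAddTorus

variable {d : ℕ}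

/-- The identification of `ℝ^d / (2πℤ)^d` with the unit torus `(ℝ/ℤ)^d`, on which Mathlib develops
Fourier series. -/
def toTorus (x : Fin d → ℝ) : UnitAddTorus (Fin d) :=
  fun i => ((x i / (2 * Real.pi) : ℝ) : UnitAddCircle)

theorem char_eq_mFourier (k : Fin d → ℤ) (x : Fin d → ℝ) :
    char k x = mFourier k (toTorus x) := by
  simp only [char, mFourier, toTorus, ContinuousMap.coe_mk, fourier_coe_apply]
  rw [← Complex.exp_sum]
  congr 1
  push_cast
  rw [Finset.mul_sum]
  refine Finset.sum_congr rfl fun i _ => ?_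
  have : (Real.pi : ℂ) ≠ 0 := by exact_mod_cast Real.pi_ne_zero
  field_simp

theorem toTorus_eq_coe_comp_smul : (toTorus : (Fin d → ℝ) → UnitAddTorus (Fin d)) =
    (fun y i => (y i : UnitAddCircle)) ∘ ((2 * Real.pi)⁻¹ • ·) := by
  ext x i
  simp [toTorus, div_eq_inv_mul]

theorem isOpenQuotientMap_toTorus :
    IsOpenQuotientMap (toTorus : (Fin d → ℝ) → UnitAddTorus (Fin d)) := by
  rw [toTorus_eq_coe_comp_smul]
  exact (IsOpenQuotientMap.piMap fun _ => QuotientAddGroup.isOpenQuotientMap_mk).comp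
    (Homeomorph.smulOfNeZero (2 * Real.pi)⁻¹ (by positivity)).isOpenQuotientMap

theorem exists_add_smul_intCast_eq_of_toTorus_eq {x y : Fin d → ℝ} (h : toTorus x = toTorus y) :
    ∃ n : Fin d → ℤ, x + (2 * Real.pi) • (fun i => (n i : ℝ)) = y := by
  have (i : Fin d) : ∃ n : ℤ, x i + 2 * Real.pi * n = y i := by
    obtain ⟨n, hn⟩ := AddSubgroup.mem_zmultiples_iff.mp (QuotientAddGroup.eq.mp (congrFun h i))
    refine ⟨n, ?_⟩
    rw [zsmul_eq_mul, mul_one] at hn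
    rw [hn]
    field_simp
    ring
  choose n hn using this
  exact ⟨n, funext hn⟩

theorem periodicT.periodic_single {f : (Fin d → ℝ) → ℝ} (hf : periodicT f) (i : Fin d) :
    Function.Periodic f (Pi.single i (2 * Real.pi)) := fun x => by
  rw [← hf x i]
  congr 1
  ext j
  simp [Pi.single_apply]

theorem periodicT.periodic_smul_intCast {f : (Fin d → ℝ) → ℝ} (hf : periodicT f)
    (n : Fin d → ℤ) : Function.Periodic f ((2 * Real.pi) • fun i => (n i : ℝ)) := by
  have : ((2 * Real.pi) • fun i => (n i : ℝ)) = ∑ i, n i • Pi.single i (2 * Real.pi) := by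
    ext j
    simp [Finset.sum_apply, Pi.single_apply, mul_comm]
  rw [this]
  exact Finset.sum_induction _ _ (fun _ _ => Function.Periodic.add_period)
    (fun x => by rw [add_zero]) fun i _ => (hf.periodic_single i).zsmul (n i)

theorem periodicT.exists_lift {f : (Fin d → ℝ) → ℝ} (hf : periodicT f) (hc : Continuous f) :
    ∃ F : C(UnitAddTorus (Fin d), ℝ), ∀ x, F (toTorus x) = f x := by
  let q : C(Fin d → ℝ, UnitAddTorus (Fin d)) := ⟨toTorus, isOpenQuotientMap_toTorus.continuous⟩
  have hq : Topology.IsQuotientMap q := isOpenQuotientMap_toTorus.isQuotientMap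
  have factors : Function.FactorsThrough (⟨f, hc⟩ : C(Fin d → ℝ, ℝ)) q := fun x y hxy => by
    obtain ⟨n, rfl⟩ := exists_add_smul_intCast_eq_of_toTorus_eq hxy
    exact (hf.periodic_smul_intCast n x).symm
  exact ⟨hq.lift ⟨f, hc⟩ factors, DFunLike.congr_fun (hq.lift_comp ⟨f, hc⟩ factors)⟩

theorem measurePreserving_coe_unitAddTorus :
    MeasurePreserving (fun (y : Fin d → ℝ) i => (y i : UnitAddCircle))
      (volume.restrict (Set.univ.pi fun _ => Set.Ico 0 1)) volume := by
  have circle (_ : Fin d) : MeasurePreserving ((↑) : ℝ → UnitAddCircle)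
      (volume.restrict (Set.Ico 0 1)) volume := by
    have := UnitAddCircle.measurePreserving_mk 0
    rwa [zero_add, ← Measure.restrict_congr_set Ico_ae_eq_Ioc,
      AddCircle.volume_eq_smul_haarAddCircle, ENNReal.ofReal_one, one_smul] at this
  rw [volume_pi, Measure.restrict_pi_pi]
  exact measurePreserving_pi _ _ circle

theorem smul_preimage_unitBox :
    ((2 * Real.pi)⁻¹ • ·) ⁻¹' (Set.univ.pi fun _ : Fin d => Set.Ico (0 : ℝ) 1) = box d := by
  ext x
  simp only [Set.mem_preimage, box, Set.mem_univ_pi, Pi.smul_apply, smul_eq_mul, Set.mem_Ico]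
  refine forall_congr' fun i => ?_
  rw [mul_nonneg_iff_of_pos_left (by positivity), inv_mul_lt_iff₀ (by positivity), mul_one]

theorem map_toTorus_μbox :
    (μbox d).map toTorus = ENNReal.ofReal ((2 * Real.pi) ^ d) • volume := by
  have hsmul : Measurable ((2 * Real.pi)⁻¹ • · : (Fin d → ℝ) → Fin d → ℝ) :=
    measurable_const_smul _
  rw [toTorus_eq_coe_comp_smul, ← Measure.map_map measurePreserving_coe_unitAddTorus.measurable
    hsmul, μbox, ← smul_preimage_unitBox, ← Measure.restrict_map hsmul
    (MeasurableSet.univ_pi fun _ => measurableSet_Ico), Measure.map_addHaar_smul _ (by positivity),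
    Measure.restrict_smul, Measure.map_smul, measurePreserving_coe_unitAddTorus.map_eq]
  congr 2
  rw [Module.finrank_fin_fun, inv_pow, inv_inv, abs_of_pos (by positivity)]

theorem coeffC_comp_toTorus {G : UnitAddTorus (Fin d) → ℂ}
    (hG : AEStronglyMeasurable G volume) : coeffC (fun x => G (toTorus x)) = mFourierCoeff G := by
  ext k
  have hpi : (((2 * Real.pi) ^ d : ℝ) : ℂ) ≠ 0 := by exact_mod_cast (by positivity)
  have hmeas : AEStronglyMeasurable (fun t => mFourier (-k) t • G t) ((μbox d).map toTorus) := by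
    rw [map_toTorus_μbox]
    exact ((mFourier (-k)).continuous.aestronglyMeasurable.smul hG).smul_measure _
  have transfer := integral_map isOpenQuotientMap_toTorus.continuous.aemeasurable hmeas
  rw [map_toTorus_μbox, integral_smul_measure, ENNReal.toReal_ofReal (by positivity)] at transfer
  simp only [coeffC, char_eq_mFourier, ← mFourier_neg]
  rw [mFourierCoeff, inv_mul_eq_iff_eq_mul₀ hpi, ← Complex.real_smul, transfer]
  simp only [smul_eq_mul, mul_comm, μbox]

theorem eLpNorm_comp_toTorus {G : UnitAddTorus (Fin d) → ℂ} (hG : AEStronglyMeasurable G volume)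
    (p : ℝ≥0∞) : eLpNorm (fun x => G (toTorus x)) p (μbox d) =
      ENNReal.ofReal ((2 * Real.pi) ^ d) ^ p⁻¹.toReal * eLpNorm G p volume := by
  have hpi : ENNReal.ofReal ((2 * Real.pi) ^ d) ≠ 0 := by
    rw [ENNReal.ofReal_ne_zero_iff]
    positivity
  rw [← Function.comp_def, ← eLpNorm_map_measure (by rw [map_toTorus_μbox]; exact hG.smul_measure _)
    isOpenQuotientMap_toTorus.continuous.aemeasurable, map_toTorus_μbox,
    eLpNorm_smul_measure_of_ne_zero hpi]
  simp

theorem mFourierCoeff_toLp_of_memLp {f : UnitAddTorus (Fin d) → ℂ} (hf : MemLp f 2 volume) :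
    mFourierCoeff (hf.toLp f) = mFourierCoeff f := by
  ext k
  refine integral_congr_ae ?_
  filter_upwards [hf.coeFn_toLp] with t ht
  rw [ht]

theorem l2Sq_mFourierCoeff {f : UnitAddTorus (Fin d) → ℂ} (hf : MemLp f 2 volume) :
    l2Sq (mFourierCoeff f) = eLpNorm f 2 volume ^ 2 := by
  have parseval := lp.hasSum_norm (by norm_num) (mFourierBasis.repr (hf.toLp f))
  simp only [mFourierBasis_repr, mFourierCoeff_toLp_of_memLp hf, LinearIsometryEquiv.norm_map,
    ENNReal.toReal_ofNat, Real.rpow_two] at parseval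
  calc l2Sq (mFourierCoeff f) = ∑' k, ENNReal.ofReal (‖mFourierCoeff f k‖ ^ 2) :=
        tsum_congr fun k => by rw [ENNReal.ofReal_pow (norm_nonneg _), ofReal_norm]; rfl
    _ = ENNReal.ofReal (‖hf.toLp f‖ ^ 2) := by
        rw [← ENNReal.ofReal_tsum_of_nonneg (fun _ => by positivity) parseval.summable,
          parseval.tsum_eq]
    _ = eLpNorm f 2 volume ^ 2 := by
        rw [ENNReal.ofReal_pow (norm_nonneg _), ofReal_norm, Lp.enorm_toLp]

theorem exists_memLp_mFourierCoeff_eq {a : (Fin d → ℤ) → ℂ} (ha : l2Sq a ≠ ∞) :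
    ∃ f : UnitAddTorus (Fin d) → ℂ, MemLp f 2 volume ∧ mFourierCoeff f = a := by
  have mem : Memℓp a 2 := by
    refine memℓp_gen ?_
    convert! ENNReal.summable_toReal ha with k
    simp
  refine ⟨mFourierBasis.repr.symm ⟨a, mem⟩, Lp.memLp _, funext fun k => ?_⟩
  rw [← mFourierBasis_repr, LinearIsometryEquiv.apply_symm_apply]

theorem mFourierCoeff_linearCombination (l : (Fin d → ℤ) →₀ ℂ) :
    mFourierCoeff (Finsupp.linearCombination ℂ mFourier l : C(UnitAddTorus (Fin d), ℂ)) = l := by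
  ext k
  have toLp_eq : (Finsupp.linearCombination ℂ mFourier l : C(UnitAddTorus (Fin d), ℂ)).toLp
      2 volume ℂ = Finsupp.linearCombination ℂ (mFourierLp 2) l := by
    rw [← ContinuousLinearMap.coe_coe, Finsupp.apply_linearCombination]
    rfl
  rw [← mFourierCoeff_toLp, toLp_eq, ← mFourierBasis_repr, HilbertBasis.repr_apply_apply,
    coe_mFourierBasis, orthonormal_mFourier.inner_right_finsupp]

theorem realize_eq_linearCombination (l : (Fin d → ℤ) →₀ ℂ) (x : Fin d → ℝ) :
    realize l x =
      (Finsupp.linearCombination ℂ mFourier l : C(UnitAddTorus (Fin d), ℂ)) (toTorus x) := by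
  rw [realize, tsum_eq_sum (s := l.support) fun k hk => by
    rw [Finsupp.notMem_support_iff.mp hk, zero_mul]]
  simp [Finsupp.linearCombination_apply, Finsupp.sum, char_eq_mFourier]

theorem finite_knorm_le (R : ℝ) : {k : Fin d → ℤ | knorm k ≤ R}.Finite := by
  refine (Set.Finite.pi' fun _ => Set.finite_Icc (-⌈R⌉) ⌈R⌉).subset fun k hk i => ?_
  have h := abs_le.mp ((abs_le_knorm k i).trans (hk.trans (Int.le_ceil R)))
  exact ⟨by exact_mod_cast h.1, by exact_mod_cast h.2⟩

theorem one_add_knorm_sq_mem_Icc_of_lpBlock_ne_zero {n : ℕ} {c : (Fin d → ℤ) → ℂ} {k : Fin d → ℤ}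
    (h : lpBlock n c k ≠ 0) : 1 + knorm k ^ 2 ∈ Set.Icc ((4 : ℝ) ^ n / 4) (4 * 4 ^ n) := by
  have hk : 0 ≤ knorm k := Real.sqrt_nonneg _
  have h4 (m : ℕ) : (4 : ℝ) ^ m = 2 ^ m * 2 ^ m := by rw [← mul_pow]; norm_num
  cases n with
  | zero =>
    have : knorm k < 1 := by by_contra hk; simp [lpBlock, hk] at h
    constructor <;> nlinarith
  | succ n =>
    obtain ⟨hl, hu⟩ : 2 ^ n ≤ knorm k ∧ knorm k < 2 ^ (n + 1) := by
      by_contra hk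
      exact h (by simp only [lpBlock, Nat.add_eq_zero_iff, one_ne_zero, and_false, if_false,
        Nat.add_sub_cancel, if_neg hk])
    have : (1 : ℝ) ≤ 2 ^ n := one_le_pow₀ one_le_two
    rw [pow_succ] at hu
    rw [pow_succ, h4]
    constructor <;> nlinarith

theorem finite_support_lpBlock (n : ℕ) (c : (Fin d → ℤ) → ℂ) :
    (Function.support (lpBlock n c)).Finite :=
  (finite_knorm_le (4 * 4 ^ n)).subset fun k hk => by
    have := (one_add_knorm_sq_mem_Icc_of_lpBlock_ne_zero hk).2
    rw [Set.mem_ofPred_eq]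
    nlinarith [sq_nonneg (knorm k - 1)]

theorem l2Sq_lpBlock_le_blockLp_sq {p : ℝ≥0∞} (hp : 2 ≤ p) (n : ℕ) (c : (Fin d → ℤ) → ℂ) :
    l2Sq (lpBlock n c) ≤ blockLp n p c ^ 2 := by
  let l : (Fin d → ℤ) →₀ ℂ := Finsupp.ofSupportFinite _ (finite_support_lpBlock n c)
  let P : C(UnitAddTorus (Fin d), ℂ) := Finsupp.linearCombination ℂ mFourier l
  have hP : AEStronglyMeasurable P volume := P.continuous.aestronglyMeasurable
  have one_le_pi : 1 ≤ ENNReal.ofReal ((2 * Real.pi) ^ d) :=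
    ENNReal.one_le_ofReal.mpr (one_le_pow₀ (by linarith [Real.two_le_pi]))
  calc l2Sq (lpBlock n c) = eLpNorm P 2 volume ^ 2 := by
        rw [← l2Sq_mFourierCoeff (P.memLp volume ℂ), mFourierCoeff_linearCombination]
        rfl
    _ ≤ (ENNReal.ofReal ((2 * Real.pi) ^ d) ^ p⁻¹.toReal * eLpNorm P p volume) ^ 2 := by
        gcongr
        refine (eLpNorm_le_eLpNorm_of_exponent_le hp hP).trans (le_mul_of_one_le_left' ?_)
        simpa only [ENNReal.one_rpow] using
          ENNReal.rpow_le_rpow one_le_pi (ENNReal.toReal_nonneg (a := p⁻¹))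
    _ = blockLp n p c ^ 2 := by
        rw [← eLpNorm_comp_toTorus hP, blockLp]
        simp only [P, ← realize_eq_linearCombination]
        rfl

theorem two_rpow_mul_blockLp_le_besovNorm {q : ℝ≥0∞} (hq : q ≠ 0) (α : ℝ) (p : ℝ≥0∞) (n : ℕ)
    (c : (Fin d → ℤ) → ℂ) : 2 ^ (α * n) * blockLp n p c ≤ besovNorm α p q c := by
  rw [besovNorm]
  split_ifs with htop
  · exact le_iSup (fun n : ℕ => (2 : ℝ≥0∞) ^ (α * n) * blockLp n p c) n
  · rw [one_div, ENNReal.le_rpow_inv_iff (ENNReal.toReal_pos hq htop)]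
    exact ENNReal.le_tsum n

theorem exists_lpBlock_eq (c : (Fin d → ℤ) → ℂ) (k : Fin d → ℤ) :
    ∃ n : ℕ, lpBlock n c k = c k := by
  rcases lt_or_ge (knorm k) 1 with h | h
  · exact ⟨0, by simp [lpBlock, h]⟩
  · obtain ⟨n, hn, hn'⟩ := exists_nat_pow_near h one_lt_two
    exact ⟨n + 1, by simp [lpBlock, hn, hn']⟩

theorem sobSq_le_tsum_sobSq_lpBlock (s : ℝ) (c : (Fin d → ℤ) → ℂ) :
    sobSq s c ≤ ∑' n, sobSq s (lpBlock n c) := by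
  simp only [sobSq_eq_tsum_sobW]
  rw [ENNReal.tsum_comm]
  refine ENNReal.tsum_le_tsum fun k => ?_
  obtain ⟨n, hn⟩ := exists_lpBlock_eq c k
  rw [← hn]
  exact ENNReal.le_tsum (f := fun n => sobW s k * ‖lpBlock n c k‖ₑ ^ 2) n

theorem rpow_le_four_rpow_abs_mul_rpow {x y : ℝ} (s : ℝ) (hx : 0 < x)
    (h : y ∈ Set.Icc (x / 4) (4 * x)) : y ^ s ≤ 4 ^ |s| * x ^ s := by
  rcases le_total 0 s with hs | hs
  · rw [abs_of_nonneg hs, ← Real.mul_rpow (by norm_num) hx.le]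
    exact Real.rpow_le_rpow (by linarith [h.1]) h.2 hs
  · rw [abs_of_nonpos hs, Real.rpow_neg (by norm_num), ← Real.inv_rpow (by norm_num),
      ← Real.mul_rpow (by norm_num) hx.le, inv_mul_eq_div]
    exact Real.rpow_le_rpow_of_nonpos (by positivity) h.1 hs

theorem four_rpow_mul_natCast (s : ℝ) (n : ℕ) :
    (4 : ℝ≥0∞) ^ (s * n) = ENNReal.ofReal ((4 ^ n) ^ s) := by
  rw [← ENNReal.ofReal_rpow_of_pos (by positivity), ENNReal.ofReal_pow (by norm_num),
    ENNReal.ofReal_ofNat, ← ENNReal.rpow_natCast, ← ENNReal.rpow_mul, mul_comm]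

theorem sobSq_lpBlock_le (s : ℝ) (n : ℕ) (c : (Fin d → ℤ) → ℂ) :
    sobSq s (lpBlock n c) ≤ ENNReal.ofReal (4 ^ |s|) * (4 ^ (s * n) * l2Sq (lpBlock n c)) := by
  rw [sobSq_eq_tsum_sobW, l2Sq, ← ENNReal.tsum_mul_left, ← ENNReal.tsum_mul_left]
  refine ENNReal.tsum_le_tsum fun k => ?_
  by_cases h0 : lpBlock n c k = 0
  · simp [h0]
  rw [← mul_assoc]
  refine mul_le_mul_left ?_ _
  rw [four_rpow_mul_natCast, sobW, ← ENNReal.ofReal_mul (by positivity)]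
  exact ENNReal.ofReal_le_ofReal <| rpow_le_four_rpow_abs_mul_rpow s (by positivity)
    (one_add_knorm_sq_mem_Icc_of_lpBlock_ne_zero h0)

theorem four_rpow_mul_sq_eq (s α : ℝ) (n : ℕ) (x : ℝ≥0∞) :
    4 ^ (s * n) * x ^ 2 = (4 ^ (s - α)) ^ n * (2 ^ (α * n) * x) ^ 2 := by
  have h4 (r : ℝ) : ((2 : ℝ≥0∞) ^ r) ^ 2 = 4 ^ r := by
    rw [← ENNReal.rpow_natCast, ← ENNReal.rpow_mul, mul_comm, ENNReal.rpow_mul]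
    norm_num
  rw [mul_pow, h4, ← ENNReal.rpow_natCast (4 ^ _) n, ← ENNReal.rpow_mul, ← mul_assoc,
    ← ENNReal.rpow_add _ _ four_ne_zero ENNReal.ofNat_ne_top, ← add_mul, sub_add_cancel]

theorem sobSq_ne_top_of_besovNorm_ne_top {α s : ℝ} {p q : ℝ≥0∞} (hs : s < α) (hp : 2 ≤ p)
    (hq : q ≠ 0) {c : (Fin d → ℤ) → ℂ} (hc : besovNorm α p q c ≠ ∞) : sobSq s c ≠ ∞ := by
  have ratio_lt_one : (4 : ℝ≥0∞) ^ (s - α) < 1 :=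
    ENNReal.rpow_lt_one_of_one_lt_of_neg (by norm_num) (sub_neg.mpr hs)
  have block (n : ℕ) : sobSq s (lpBlock n c) ≤
      ENNReal.ofReal (4 ^ |s|) * ((4 ^ (s - α)) ^ n * besovNorm α p q c ^ 2) := by
    refine (sobSq_lpBlock_le s n c).trans ?_
    refine mul_le_mul_right ?_ _
    calc 4 ^ (s * n) * l2Sq (lpBlock n c) ≤ 4 ^ (s * n) * blockLp n p c ^ 2 := by
          gcongr
          exact l2Sq_lpBlock_le_blockLp_sq hp n c
      _ ≤ _ := by
          rw [four_rpow_mul_sq_eq s α]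
          gcongr
          exact two_rpow_mul_blockLp_le_besovNorm hq α p n c
  refine ne_top_of_le_ne_top ?_
    ((sobSq_le_tsum_sobSq_lpBlock s c).trans (ENNReal.tsum_le_tsum block))
  rw [ENNReal.tsum_mul_left, ENNReal.tsum_mul_right, ENNReal.tsum_geometric]
  exact ENNReal.mul_ne_top ENNReal.ofReal_ne_top <| ENNReal.mul_ne_top
    (ENNReal.inv_ne_top.mpr (tsub_pos_of_lt ratio_lt_one).ne') (ENNReal.pow_ne_top hc)

/-! ### Sobolev regularity by dyadic differences -/

theorem norm_mFourier_apply (k : Fin d → ℤ) (t : UnitAddTorus (Fin d)) : ‖mFourier k t‖ = 1 := by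
  simp only [mFourier, fourier_apply, ContinuousMap.coe_mk, norm_prod, Circle.norm_coe,
    Finset.prod_const_one]

theorem integrable_mFourier_smul {u : UnitAddTorus (Fin d) → ℂ} (hu : Integrable u volume)
    (k : Fin d → ℤ) : Integrable (fun t => mFourier k t • u t) volume :=
  hu.bdd_smul 1 (mFourier k).continuous.aestronglyMeasurable
    (ae_of_all _ fun t => (norm_mFourier_apply k t).le)

theorem mFourier_apply_add (k : Fin d → ℤ) (x y : UnitAddTorus (Fin d)) :
    mFourier k (x + y) = mFourier k x * mFourier k y := by
  simp [mFourier, fourier_apply, AddCircle.toCircle_add, Finset.prod_mul_distrib]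

theorem mFourierCoeff_comp_add_right (f : UnitAddTorus (Fin d) → ℂ) (h : UnitAddTorus (Fin d))
    (k : Fin d → ℤ) :
    mFourierCoeff (fun t => f (t + h)) k = mFourier k h * mFourierCoeff f k := by
  have cancel : mFourier k h * mFourier (-k) h = 1 := by
    rw [← mFourier_add, add_neg_cancel, mFourier_zero, ContinuousMap.one_apply]
  rw [mFourierCoeff, mFourierCoeff,
    ← integral_add_right_eq_self (fun t => mFourier (-k) t • f t) h, ← integral_const_mul]
  refine integral_congr_ae (ae_of_all _ fun t => ?_)
  simp only [mFourier_apply_add, smul_eq_mul]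
  linear_combination -(mFourier (-k) t * f (t + h)) * cancel

theorem mFourierCoeff_sub {f g : UnitAddTorus (Fin d) → ℂ} (hf : Integrable f volume)
    (hg : Integrable g volume) (k : Fin d → ℤ) :
    mFourierCoeff (fun t => f t - g t) k = mFourierCoeff f k - mFourierCoeff g k := by
  simp only [mFourierCoeff, smul_sub]
  exact integral_sub (integrable_mFourier_smul hf _) (integrable_mFourier_smul hg _)

theorem eLpNorm_comp_add_right_sub_sq {f : UnitAddTorus (Fin d) → ℂ} (hf : MemLp f 2 volume)
    (h : UnitAddTorus (Fin d)) :
    eLpNorm (fun t => f (t + h) - f t) 2 volume ^ 2 =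
      ∑' k, ‖mFourier k h - 1‖ₑ ^ 2 * ‖mFourierCoeff f k‖ₑ ^ 2 := by
  have hfh : MemLp (fun t => f (t + h)) 2 volume :=
    hf.comp_measurePreserving (measurePreserving_add_right volume h)
  have hsub : MemLp (fun t => f (t + h) - f t) 2 volume := hfh.sub hf
  rw [← l2Sq_mFourierCoeff hsub]
  refine tsum_congr fun k => ?_
  rw [← mul_pow, ← enorm_mul, sub_one_mul, ← mFourierCoeff_comp_add_right,
    ← mFourierCoeff_sub (hfh.integrable one_le_two) (hf.integrable one_le_two)]
  rfl

/-- The shift by `2⁻ⁿ` in the `i`-th coordinate of `(ℝ / 2πℤ)^d`. -/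
def dyadicShift (i : Fin d) (n : ℕ) : UnitAddTorus (Fin d) := toTorus (Pi.single i ((2 : ℝ) ^ n)⁻¹)

/-- A discrete Sobolev–Slobodeckij seminorm of order `r`, squared: the double integral of squared
differences is sampled at the dyadic coordinate shifts. Unlike the Fourier norm it is visibly
monotone under composition with Lipschitz maps. -/
def diffSobSq (r : ℝ) (f : UnitAddTorus (Fin d) → ℂ) : ℝ≥0∞ :=
  ∑ i, ∑' n : ℕ, 4 ^ (r * n) * eLpNorm (fun t => f (t + dyadicShift i n) - f t) 2 volume ^ 2

/-- The Fourier multiplier of `diffSobSq`. -/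
def diffWeight (r : ℝ) (k : Fin d → ℤ) : ℝ≥0∞ :=
  ∑ i, ∑' n : ℕ, 4 ^ (r * n) * ‖mFourier k (dyadicShift i n) - 1‖ₑ ^ 2

theorem diffSobSq_eq_tsum_diffWeight (r : ℝ) {f : UnitAddTorus (Fin d) → ℂ}
    (hf : MemLp f 2 volume) :
    diffSobSq r f = ∑' k, diffWeight r k * ‖mFourierCoeff f k‖ₑ ^ 2 := by
  simp only [diffSobSq, diffWeight, eLpNorm_comp_add_right_sub_sq hf, Finset.sum_mul]
  rw [Summable.tsum_finsetSum fun _ _ => ENNReal.summable]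
  refine Finset.sum_congr rfl fun i _ => ?_
  simp only [← ENNReal.tsum_mul_left, ← ENNReal.tsum_mul_right]
  rw [ENNReal.tsum_comm]
  simp only [mul_assoc]

theorem diffSobSq_le_of_norm_sub_le {f g : UnitAddTorus (Fin d) → ℂ} {L : ℝ}
    (hL : ∀ s t, ‖g s - g t‖ ≤ L * ‖f s - f t‖) (r : ℝ) :
    diffSobSq r g ≤ ENNReal.ofReal L ^ 2 * diffSobSq r f := by
  simp only [diffSobSq, Finset.mul_sum, ← ENNReal.tsum_mul_left]
  refine Finset.sum_le_sum fun i _ => ENNReal.tsum_le_tsum fun n => ?_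
  rw [mul_left_comm, ← mul_pow]
  gcongr
  exact eLpNorm_le_mul_eLpNorm_of_ae_le_mul (ae_of_all _ fun t => hL _ _) 2

theorem mFourier_dyadicShift (k : Fin d → ℤ) (i : Fin d) (n : ℕ) :
    mFourier k (dyadicShift i n) = Complex.exp (Complex.I * ((k i / 2 ^ n : ℝ) : ℂ)) := by
  rw [dyadicShift, ← char_eq_mFourier, char]
  simp [Pi.single_apply, div_eq_mul_inv]

theorem norm_exp_I_mul_sub_one_sq_le {σ : ℝ} (h0 : 0 ≤ σ) (h1 : σ ≤ 1) (t : ℝ) :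
    ‖Complex.exp (Complex.I * (t : ℂ)) - 1‖ ^ 2 ≤ 4 * (t ^ 2) ^ σ := by
  rcases le_total (t ^ 2) 1 with h | h
  · have lipschitz : ‖Complex.exp (Complex.I * (t : ℂ)) - 1‖ ^ 2 ≤ t ^ 2 := by
      rw [← sq_abs t]
      gcongr
      exact Real.norm_exp_I_mul_ofReal_sub_one_le
    have : t ^ 2 ≤ (t ^ 2) ^ σ := by
      simpa only [Real.rpow_one] using Real.rpow_le_rpow_of_exponent_ge' (sq_nonneg t) h h0 h1
    linarith [sq_nonneg t]
  · have bounded : ‖Complex.exp (Complex.I * (t : ℂ)) - 1‖ ^ 2 ≤ 4 := by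
      rw [Complex.norm_exp_I_mul_ofReal_sub_one, Real.norm_eq_abs, sq_abs]
      nlinarith [Real.sin_sq_le_one (t / 2)]
    linarith [Real.one_le_rpow h h0]

theorem one_le_four_mul_norm_exp_I_mul_sub_one_sq {t : ℝ} (h1 : 1 ≤ |t|) (h2 : |t| ≤ 2) :
    1 ≤ 4 * ‖Complex.exp (Complex.I * (t : ℂ)) - 1‖ ^ 2 := by
  have sin_sq_abs : Real.sin (t / 2) ^ 2 = Real.sin (|t| / 2) ^ 2 := by
    rcases abs_choice t with h | h <;> simp only [h, neg_div, Real.sin_neg, neg_sq]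
  have jordan := Real.mul_le_sin (x := |t| / 2) (by positivity) (by linarith [Real.pi_gt_three])
  have : 1 / 4 ≤ 2 / Real.pi * (|t| / 2) := by
    rw [div_mul_div_comm, div_le_div_iff₀ (by norm_num) (by positivity)]
    linarith [Real.pi_le_four]
  rw [Complex.norm_exp_I_mul_ofReal_sub_one, Real.norm_eq_abs, sq_abs, mul_pow, sin_sq_abs]
  nlinarith

theorem enorm_mFourier_dyadicShift_sub_one_sq_le {σ : ℝ} (h0 : 0 ≤ σ) (h1 : σ ≤ 1)
    (k : Fin d → ℤ) (i : Fin d) (n : ℕ) :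
    ‖mFourier k (dyadicShift i n) - 1‖ₑ ^ 2 ≤ 4 * (4 ^ (-σ * n) * sobW σ k) := by
  have hki : (k i : ℝ) ^ 2 ≤ 1 + knorm k ^ 2 := by
    nlinarith [abs_le_knorm k i, sq_abs (k i : ℝ), abs_nonneg (k i : ℝ)]
  have h4 : ((2 : ℝ) ^ n) ^ 2 = 4 ^ n := by rw [← pow_mul, mul_comm, pow_mul]; norm_num
  rw [← ofReal_norm, ← ENNReal.ofReal_pow (norm_nonneg _), mFourier_dyadicShift,
    four_rpow_mul_natCast, sobW, ← ENNReal.ofReal_ofNat 4, ← ENNReal.ofReal_mul (by positivity),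
    ← ENNReal.ofReal_mul (by positivity)]
  refine ENNReal.ofReal_le_ofReal ((norm_exp_I_mul_sub_one_sq_le h0 h1 _).trans ?_)
  rw [div_pow, h4, Real.div_rpow (sq_nonneg _) (by positivity), Real.rpow_neg (by positivity),
    inv_mul_eq_div]
  gcongr

theorem diffWeight_le_sobW {σ : ℝ} (h0 : 0 ≤ σ) (h1 : σ ≤ 1) (r : ℝ) (k : Fin d → ℤ) :
    diffWeight r k ≤ d * (4 * (1 - 4 ^ (r - σ))⁻¹) * sobW σ k := by
  have term (i : Fin d) (n : ℕ) : 4 ^ (r * n) * ‖mFourier k (dyadicShift i n) - 1‖ₑ ^ 2 ≤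
      4 * ((4 ^ (r - σ)) ^ n * sobW σ k) :=
    calc 4 ^ (r * n) * ‖mFourier k (dyadicShift i n) - 1‖ₑ ^ 2
        ≤ 4 ^ (r * n) * (4 * (4 ^ (-σ * n) * sobW σ k)) := by
          gcongr
          exact enorm_mFourier_dyadicShift_sub_one_sq_le h0 h1 k i n
      _ = 4 * (4 ^ (r * n + -σ * n) * sobW σ k) := by
          rw [ENNReal.rpow_add _ _ four_ne_zero ENNReal.ofNat_ne_top]
          ring
      _ = 4 * ((4 ^ (r - σ)) ^ n * sobW σ k) := by
          rw [← add_mul, ← sub_eq_add_neg, ENNReal.rpow_mul, ENNReal.rpow_natCast]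
  calc diffWeight r k ≤ ∑ _i : Fin d, ∑' n : ℕ, 4 * ((4 ^ (r - σ)) ^ n * sobW σ k) :=
        Finset.sum_le_sum fun i _ => ENNReal.tsum_le_tsum (term i)
    _ = _ := by
        rw [Finset.sum_const, Finset.card_univ, Fintype.card_fin, ENNReal.tsum_mul_left,
          ENNReal.tsum_mul_right, ENNReal.tsum_geometric, nsmul_eq_mul]
        ring

theorem exists_dyadic_scale {k : Fin d → ℤ} (hk : k ≠ 0) :
    ∃ (i : Fin d) (n : ℕ), 2 ^ n ≤ |(k i : ℝ)| ∧ |(k i : ℝ)| < 2 ^ (n + 1) ∧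
      1 + knorm k ^ 2 ≤ 4 * (d + 1) * 4 ^ n := by
  obtain ⟨j, hj⟩ := Function.ne_iff.mp hk
  obtain ⟨i, -, hi⟩ := Finset.exists_max_image Finset.univ (fun i => |(k i : ℝ)|)
    ⟨j, Finset.mem_univ j⟩
  have one_le : (1 : ℝ) ≤ |(k i : ℝ)| :=
    le_trans (by exact_mod_cast Int.one_le_abs hj) (hi j (Finset.mem_univ j))
  obtain ⟨n, hl, hu⟩ := exists_nat_pow_near one_le one_lt_two
  refine ⟨i, n, hl, hu, ?_⟩
  have h4 : (4 : ℝ) ^ n = (2 ^ n) ^ 2 := by rw [← pow_mul, mul_comm, pow_mul]; norm_num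
  have hsq (j : Fin d) : (k j : ℝ) ^ 2 ≤ 4 * 4 ^ n := by
    have := (hi j (Finset.mem_univ j)).trans hu.le
    rw [h4, ← sq_abs]
    rw [pow_succ] at this
    nlinarith [abs_nonneg (k j : ℝ)]
  have hsum : knorm k ^ 2 ≤ d * (4 * 4 ^ n) := by
    rw [knorm_sq]
    simpa using Finset.sum_le_card_nsmul Finset.univ (fun i => (k i : ℝ) ^ 2) _ fun j _ => hsq j
  linarith [one_le_pow₀ (n := n) (by norm_num : (1 : ℝ) ≤ 4)]

theorem sobW_le_one_add_diffWeight {r : ℝ} (hr : 0 ≤ r) (k : Fin d → ℤ) :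
    sobW r k ≤ 1 + ENNReal.ofReal ((4 * (d + 1)) ^ r * 4) * diffWeight r k := by
  rcases eq_or_ne k 0 with rfl | hk
  · exact le_add_right (by simp [sobW, knorm])
  obtain ⟨i, n, hl, hu, hn⟩ := exists_dyadic_scale hk
  have oscillation : 1 ≤ 4 * ‖mFourier k (dyadicShift i n) - 1‖ ^ 2 := by
    have h2 : (0 : ℝ) < 2 ^ n := by positivity
    rw [mFourier_dyadicShift]
    refine one_le_four_mul_norm_exp_I_mul_sub_one_sq ?_ ?_ <;> rw [abs_div, abs_of_pos h2]
    · rwa [one_le_div₀ h2]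
    · rw [div_le_iff₀ h2, mul_comm, ← pow_succ]
      exact hu.le
  refine le_add_left ?_
  calc sobW r k ≤ ENNReal.ofReal ((4 * (d + 1)) ^ r * 4) *
          (4 ^ (r * n) * ‖mFourier k (dyadicShift i n) - 1‖ₑ ^ 2) := by
        rw [sobW, four_rpow_mul_natCast, ← ofReal_norm, ← ENNReal.ofReal_pow (norm_nonneg _),
          ← ENNReal.ofReal_mul (by positivity), ← ENNReal.ofReal_mul (by positivity)]
        refine ENNReal.ofReal_le_ofReal ?_
        calc (1 + knorm k ^ 2) ^ r ≤ (4 * (d + 1)) ^ r * (4 ^ n) ^ r * 1 := by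
              rw [← Real.mul_rpow (by positivity) (by positivity), mul_one]
              gcongr
          _ ≤ (4 * (d + 1)) ^ r * (4 ^ n) ^ r *
                (4 * ‖mFourier k (dyadicShift i n) - 1‖ ^ 2) := by gcongr
          _ = _ := by ring
    _ ≤ _ := by
        gcongr
        exact (ENNReal.le_tsum n).trans (Finset.single_le_sum (f := fun i => ∑' n : ℕ,
          4 ^ (r * n) * ‖mFourier k (dyadicShift i n) - 1‖ₑ ^ 2) (fun _ _ => zero_le)
          (Finset.mem_univ i))

theorem sobSq_mFourierCoeff_le_diffSobSq {r : ℝ} (hr : 0 ≤ r) {f : UnitAddTorus (Fin d) → ℂ}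
    (hf : MemLp f 2 volume) :
    sobSq r (mFourierCoeff f) ≤
      eLpNorm f 2 volume ^ 2 + ENNReal.ofReal ((4 * (d + 1)) ^ r * 4) * diffSobSq r f := by
  rw [← l2Sq_mFourierCoeff hf, diffSobSq_eq_tsum_diffWeight r hf, ← ENNReal.tsum_mul_left, l2Sq,
    ← ENNReal.tsum_add, sobSq_eq_tsum_sobW]
  refine ENNReal.tsum_le_tsum fun k => ?_
  rw [← mul_assoc]
  exact (mul_le_mul_left (sobW_le_one_add_diffWeight hr k) _).trans_eq
    (by rw [add_mul, one_mul]; rfl)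

theorem diffSobSq_le_sobSq_mFourierCoeff {σ : ℝ} (h0 : 0 ≤ σ) (h1 : σ ≤ 1) (r : ℝ)
    {f : UnitAddTorus (Fin d) → ℂ} (hf : MemLp f 2 volume) :
    diffSobSq r f ≤ d * (4 * (1 - 4 ^ (r - σ))⁻¹) * sobSq σ (mFourierCoeff f) := by
  rw [diffSobSq_eq_tsum_diffWeight r hf, sobSq_eq_tsum_sobW, ← ENNReal.tsum_mul_left]
  refine ENNReal.tsum_le_tsum fun k => ?_
  rw [← mul_assoc]
  exact mul_le_mul_left (diffWeight_le_sobW h0 h1 r k) _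

theorem sobSq_mFourierCoeff_ne_top_of_norm_sub_le {f g : UnitAddTorus (Fin d) → ℂ} {L r σ : ℝ}
    (hf : MemLp f 2 volume) (hg : MemLp g 2 volume) (hL : ∀ s t, ‖g s - g t‖ ≤ L * ‖f s - f t‖)
    (hr : 0 ≤ r) (hrσ : r < σ) (hσ : σ ≤ 1) (hfσ : sobSq σ (mFourierCoeff f) ≠ ∞) :
    sobSq r (mFourierCoeff g) ≠ ∞ := by
  have ratio_lt_one : (4 : ℝ≥0∞) ^ (r - σ) < 1 :=
    ENNReal.rpow_lt_one_of_one_lt_of_neg (by norm_num) (sub_neg.mpr hrσ)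
  have geometric : (1 - (4 : ℝ≥0∞) ^ (r - σ))⁻¹ ≠ ∞ :=
    ENNReal.inv_ne_top.mpr (tsub_pos_of_lt ratio_lt_one).ne'
  have diff_f : diffSobSq r f ≠ ∞ := ne_top_of_le_ne_top (by finiteness)
    (diffSobSq_le_sobSq_mFourierCoeff (hr.trans hrσ.le) hσ r hf)
  have diff_g : diffSobSq r g ≠ ∞ := ne_top_of_le_ne_top (by finiteness)
    (diffSobSq_le_of_norm_sub_le hL r)
  have := hg.eLpNorm_ne_top
  exact ne_top_of_le_ne_top (by finiteness) (sobSq_mFourierCoeff_le_diffSobSq hr hg)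

/-! ### Boundedness of the form -/

theorem convC_mFourierCoeff {f g : UnitAddTorus (Fin d) → ℂ} (hf : MemLp f 2 volume)
    (hg : MemLp g 2 volume) :
    convC (mFourierCoeff f) (mFourierCoeff g) = mFourierCoeff fun t => f t * g t := by
  ext k
  have hh : MemLp (fun t => (starRingEnd ℂ) (g t) * mFourier k t) 2 volume := by
    refine hg.of_le ?_ (ae_of_all _ fun t => ?_)
    · exact (Complex.continuous_conj.comp_aestronglyMeasurable hg.aestronglyMeasurable).mul
        (mFourier k).continuous.aestronglyMeasurable
    · simp [norm_mFourier_apply]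
  have conj_coeff (l : Fin d → ℤ) : (starRingEnd ℂ) (mFourierCoeff
      (fun t => (starRingEnd ℂ) (g t) * mFourier k t) l) = mFourierCoeff g (k - l) := by
    rw [mFourierCoeff, mFourierCoeff, ← integral_conj]
    refine integral_congr_ae (ae_of_all _ fun t => ?_)
    simp only [smul_eq_mul, map_mul, Complex.conj_conj, ← mFourier_neg, neg_neg]
    rw [neg_sub, sub_eq_add_neg, mFourier_add]
    ring
  have parseval := hasSum_prod_mFourierCoeff (hh.toLp _) (hf.toLp f)
  simp only [mFourierCoeff_toLp_of_memLp, conj_coeff] at parseval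
  rw [convC, mFourierCoeff]
  convert parseval.tsum_eq using 1
  · exact tsum_congr fun l => mul_comm _ _
  · refine integral_congr_ae ?_
    filter_upwards [hh.coeFn_toLp, hf.coeFn_toLp] with t hht hft
    simp only [hht, hft, smul_eq_mul, map_mul, Complex.conj_conj, ← mFourier_neg]
    ring

open scoped Convolution in
theorem mFourierCoeff_convolution {f g : UnitAddTorus (Fin d) → ℂ} (hf : Integrable f volume)
    (hg : Integrable g volume) (k : Fin d → ℤ) :
    mFourierCoeff (f ⋆[ContinuousLinearMap.mul ℂ ℂ, volume] g) k =
      mFourierCoeff f k * mFourierCoeff g k := by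
  refine Eq.trans ?_ (integral_convolution (ContinuousLinearMap.mul ℂ ℂ)
    (integrable_mFourier_smul hf (-k)) (integrable_mFourier_smul hg (-k)))
  refine integral_congr_ae (ae_of_all _ fun x => ?_)
  simp only [convolution_mul, smul_eq_mul, ← integral_const_mul]
  refine integral_congr_ae (ae_of_all _ fun t => ?_)
  have character : mFourier (-k) x = mFourier (-k) t * mFourier (-k) (x - t) := by
    rw [← mFourier_apply_add, add_sub_cancel]
  simp only [character]
  ring

theorem mFourierCoeff_comp_neg (f : UnitAddTorus (Fin d) → ℂ) (k : Fin d → ℤ) :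
    mFourierCoeff (fun t => f (-t)) k = mFourierCoeff f (-k) := by
  have := Measure.IsAddHaarMeasure.isNegInvariant_of_regular
    (volume : Measure (UnitAddTorus (Fin d)))
  rw [mFourierCoeff, mFourierCoeff,
    ← integral_neg_eq_self (fun t => mFourier (- -k) t • f t)]
  refine integral_congr_ae (ae_of_all _ fun t => ?_)
  simp [mFourier, fourier_apply, AddCircle.toCircle_neg]

open scoped Convolution in
theorem pairC_mFourierCoeff {F : UnitAddTorus (Fin d) → ℂ} (hF : Integrable F volume)
    (E : C(UnitAddTorus (Fin d), ℂ))
    (hs : Summable fun k => mFourierCoeff F k * mFourierCoeff E (-k)) :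
    pairC (mFourierCoeff F) (mFourierCoeff E) = ∫ t, F t * E t := by
  let E' : C(UnitAddTorus (Fin d), ℂ) := E.comp ⟨Neg.neg, continuous_neg⟩
  let G : C(UnitAddTorus (Fin d), ℂ) := ⟨F ⋆[ContinuousLinearMap.mul ℂ ℂ, volume] E',
    BddAbove.continuous_convolution_right_of_integrable _
      ⟨‖E'‖, Set.forall_mem_range.mpr E'.norm_coe_le_norm⟩ hF E'.continuous⟩
  have coeff_G : mFourierCoeff G = fun k => mFourierCoeff F k * mFourierCoeff E (-k) := by
    ext k
    rw [← mFourierCoeff_comp_neg E]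
    exact mFourierCoeff_convolution hF (E'.continuous.integrable_of_hasCompactSupport
      (HasCompactSupport.of_compactSpace _)) k
  have inversion := (hasSum_mFourier_series_apply_of_summable (coeff_G ▸ hs) 0).tsum_eq
  calc pairC (mFourierCoeff F) (mFourierCoeff E)
      = ∑' k, mFourierCoeff G k • mFourier k 0 := by simp [pairC, coeff_G, mFourier]
    _ = G 0 := inversion
    _ = ∫ t, F t * E t := by simp [G, E', convolution_mul]

theorem enorm_pairC_convC_mFourierCoeff_sq_le (E : C(UnitAddTorus (Fin d), ℂ))
    {a b : (Fin d → ℤ) → ℂ} (ha : l2Sq a ≠ ∞) (hb : l2Sq b ≠ ∞) :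
    ‖pairC (convC a b) (mFourierCoeff E)‖ₑ ^ 2 ≤ ‖E‖ₑ ^ 2 * (l2Sq a * l2Sq b) := by
  obtain ⟨f, hf, rfl⟩ := exists_memLp_mFourierCoeff_eq ha
  obtain ⟨g, hg, rfl⟩ := exists_memLp_mFourierCoeff_eq hb
  rw [convC_mFourierCoeff hf hg, l2Sq_mFourierCoeff hf, l2Sq_mFourierCoeff hg, ← mul_pow,
    ← mul_pow]
  gcongr
  by_cases hs : Summable fun k => mFourierCoeff (fun t => f t * g t) k * mFourierCoeff E (-k)
  swap
  · simp [pairC, tsum_eq_zero_of_not_summable hs]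
  have hfg : Integrable (fun t => f t * g t) volume := hf.integrable_mul hg
  rw [pairC_mFourierCoeff hfg E hs]
  calc ‖∫ t, f t * g t * E t‖ₑ ≤ eLpNorm (fun t => f t * g t * E t) 1 volume := by
        rw [eLpNorm_one_eq_lintegral_enorm]
        exact enorm_integral_le_lintegral_enorm _
    _ ≤ ‖E‖ₑ * eLpNorm (f • g) 1 volume := by
        rw [← ofReal_norm E]
        refine eLpNorm_le_mul_eLpNorm_of_ae_le_mul (ae_of_all _ fun t => ?_) 1
        rw [norm_mul, mul_comm]
        gcongr
        · exact E.norm_coe_le_norm t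
        · rfl
    _ ≤ ‖E‖ₑ * (eLpNorm f 2 volume * eLpNorm g 2 volume) := by
        gcongr
        exact eLpNorm_smul_le_mul_eLpNorm hg.aestronglyMeasurable hf.aestronglyMeasurable

theorem l2Sq_le_sobSq_one (a : (Fin d → ℤ) → ℂ) : l2Sq a ≤ sobSq 1 a := by
  refine ENNReal.tsum_le_tsum fun k => le_mul_of_one_le_left' ?_
  exact le_self_add.trans_eq (sobW_one k).symm

theorem l2Sq_gradC_le_sobSq_one (j : Fin d) (a : (Fin d → ℤ) → ℂ) :
    l2Sq (gradC j a) ≤ sobSq 1 a := by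
  rw [sobSq_eq_tsum_sobW]
  refine ENNReal.tsum_le_tsum fun k => ?_
  calc ‖gradC j a k‖ₑ ^ 2 = ‖(k j : ℂ)‖ₑ ^ 2 * ‖a k‖ₑ ^ 2 := by
        simp [gradC, enorm_mul, mul_pow, ← ofReal_norm I]
    _ ≤ sobW 1 k * ‖a k‖ₑ ^ 2 := by
        rw [sobW_one]
        gcongr
        exact le_add_left (Finset.single_le_sum (f := fun i => ‖(k i : ℂ)‖ₑ ^ 2)
          (fun _ _ => zero_le) (Finset.mem_univ j))

theorem abs_exp_sub_exp_le_of_le {a b M : ℝ} (ha : a ≤ M) (hb : b ≤ M) :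
    |Real.exp a - Real.exp b| ≤ Real.exp M * |a - b| := by
  refine (convex_Iic M).norm_image_sub_le_of_norm_deriv_le
    (fun x _ => Real.differentiableAt_exp) (fun x hx => ?_) hb ha
  rw [Real.deriv_exp, Real.norm_eq_abs, Real.abs_exp]
  exact Real.exp_le_exp.mpr hx

theorem exists_mFourierCoeff_eq_E2Xc {X : (Fin d → ℝ) → ℝ} (hXc : Continuous X)
    (hXp : periodicT X) : ∃ F : C(UnitAddTorus (Fin d), ℝ),
      (coeffC fun x => (X x : ℂ)) = mFourierCoeff (fun t => (F t : ℂ)) ∧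
      E2Xc X = mFourierCoeff (fun t => (Real.exp (2 * F t) : ℂ)) := by
  obtain ⟨F, hF⟩ := hXp.exists_lift hXc
  refine ⟨F, ?_, ?_⟩ <;> rw [← coeffC_comp_toTorus
    (Continuous.aestronglyMeasurable (by fun_prop))] <;> simp only [E2Xc, hF]

theorem sobSq_E2Xc_ne_top {X : (Fin d → ℝ) → ℝ} (hXc : Continuous X) (hXp : periodicT X)
    {r σ : ℝ} (hr : 0 ≤ r) (hrσ : r < σ) (hσ : σ ≤ 1)
    (hX : sobSq σ (coeffC fun x => (X x : ℂ)) ≠ ∞) : sobSq r (E2Xc X) ≠ ∞ := by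
  obtain ⟨F, hFX, hFE⟩ := exists_mFourierCoeff_eq_E2Xc hXc hXp
  have memLp {u : UnitAddTorus (Fin d) → ℂ} (hu : Continuous u) : MemLp u 2 volume :=
    (⟨u, hu⟩ : C(UnitAddTorus (Fin d), ℂ)).memLp volume ℂ
  have two_mul_le (t : UnitAddTorus (Fin d)) : 2 * F t ≤ 2 * ‖F‖ := by
    linarith [(le_abs_self _).trans (F.norm_coe_le_norm t)]
  rw [hFX] at hX
  rw [hFE]
  refine sobSq_mFourierCoeff_ne_top_of_norm_sub_le (L := Real.exp (2 * ‖F‖) * 2)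
    (memLp (by fun_prop)) (memLp (by fun_prop)) (fun s t => ?_) hr hrσ hσ hX
  rw [← Complex.ofReal_sub, ← Complex.ofReal_sub, Complex.norm_real, Complex.norm_real, mul_assoc]
  refine (abs_exp_sub_exp_le_of_le (two_mul_le s) (two_mul_le t)).trans_eq ?_
  rw [← mul_sub, abs_mul, abs_two, Real.norm_eq_abs]

/-- Continuity on `H¹` of a form `B` in the Fourier coefficients of its arguments. -/
def IsH1Bounded (B : ((Fin d → ℤ) → ℂ) → ((Fin d → ℤ) → ℂ) → ℂ) : Prop :=
  ∃ M : ℝ≥0∞, M ≠ ∞ ∧ ∀ a b, sobSq 1 a ≠ ∞ → sobSq 1 b ≠ ∞ →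
    ‖B a b‖ₑ ≤ M * (sobSq 1 a ^ ((1 : ℝ) / 2) * sobSq 1 b ^ ((1 : ℝ) / 2))

namespace IsH1Bounded

variable {B B' : ((Fin d → ℤ) → ℂ) → ((Fin d → ℤ) → ℂ) → ℂ}

theorem of_enorm_sq_le {M : ℝ≥0∞} (hM : M ≠ ∞) (h : ∀ a b, sobSq 1 a ≠ ∞ → sobSq 1 b ≠ ∞ →
    ‖B a b‖ₑ ^ 2 ≤ M * (sobSq 1 a * sobSq 1 b)) : IsH1Bounded B := by
  have half_nonneg : (0 : ℝ) ≤ 1 / 2 := by norm_num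
  refine ⟨M ^ ((1 : ℝ) / 2), ENNReal.rpow_ne_top_of_nonneg half_nonneg hM, fun a b ha hb => ?_⟩
  calc ‖B a b‖ₑ = (‖B a b‖ₑ ^ 2) ^ ((1 : ℝ) / 2) := by
        rw [← ENNReal.rpow_natCast, ← ENNReal.rpow_mul, Nat.cast_ofNat,
          mul_one_div_cancel two_ne_zero, ENNReal.rpow_one]
    _ ≤ (M * (sobSq 1 a * sobSq 1 b)) ^ ((1 : ℝ) / 2) := ENNReal.rpow_le_rpow (h a b ha hb)
        half_nonneg
    _ = _ := by
        rw [ENNReal.mul_rpow_of_nonneg _ _ half_nonneg, ENNReal.mul_rpow_of_nonneg _ _ half_nonneg]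

theorem add (hB : IsH1Bounded B) (hB' : IsH1Bounded B') :
    IsH1Bounded fun a b => B a b + B' a b := by
  obtain ⟨M, hM, h⟩ := hB
  obtain ⟨M', hM', h'⟩ := hB'
  refine ⟨M + M', ENNReal.add_ne_top.mpr ⟨hM, hM'⟩, fun a b ha hb => ?_⟩
  rw [add_mul]
  exact (enorm_add_le _ _).trans (add_le_add (h a b ha hb) (h' a b ha hb))

theorem sum {ι : Type*} [Fintype ι] {B : ι → ((Fin d → ℤ) → ℂ) → ((Fin d → ℤ) → ℂ) → ℂ}
    (hB : ∀ i, IsH1Bounded (B i)) : IsH1Bounded fun a b => ∑ i, B i a b := by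
  choose M hM h using hB
  refine ⟨∑ i, M i, ENNReal.sum_ne_top.mpr fun i _ => hM i, fun a b ha hb => ?_⟩
  rw [Finset.sum_mul]
  exact (enorm_sum_le _ _).trans (Finset.sum_le_sum fun i _ => h i a b ha hb)

theorem const_mul (hB : IsH1Bounded B) (z : ℂ) : IsH1Bounded fun a b => z * B a b := by
  obtain ⟨M, hM, h⟩ := hB
  refine ⟨‖z‖ₑ * M, ENNReal.mul_ne_top enorm_ne_top hM, fun a b ha hb => ?_⟩
  rw [enorm_mul, mul_assoc]
  gcongr
  exact h a b ha hb

theorem sub (hB : IsH1Bounded B) (hB' : IsH1Bounded B') :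
    IsH1Bounded fun a b => B a b - B' a b := by
  simpa only [neg_one_mul, ← sub_eq_add_neg] using hB.add (hB'.const_mul (-1))

theorem exists_le_anormSq {B : ((Fin 2 → ℤ) → ℂ) → ((Fin 2 → ℤ) → ℂ) → ℂ} (hB : IsH1Bounded B)
    (X : (Fin 2 → ℝ) → ℝ) : ∃ C : ℝ, 0 < C ∧ ∀ a b, anormSq X a ≠ ∞ → anormSq X b ≠ ∞ →
      ENNReal.ofReal ‖B a b‖ ≤
        ENNReal.ofReal C * anormSq X a ^ ((1 : ℝ) / 2) * anormSq X b ^ ((1 : ℝ) / 2) := by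
  obtain ⟨M, hM, h⟩ := hB
  have sobSq_le (a : (Fin 2 → ℤ) → ℂ) : sobSq 1 a ≤ anormSq X a := le_add_self
  have hMC : M ≤ ENNReal.ofReal (M.toReal + 1) :=
    ENNReal.le_ofReal_iff_toReal_le hM (by positivity) |>.mpr (by linarith)
  refine ⟨M.toReal + 1, by positivity, fun a b ha hb => ?_⟩
  rw [ofReal_norm, mul_assoc]
  refine (h a b (ne_top_of_le_ne_top ha (sobSq_le a)) (ne_top_of_le_ne_top hb (sobSq_le b))).trans
    ?_
  gcongr <;> exact sobSq_le _

end IsH1Bounded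

theorem isH1Bounded_pairC_convC_E2Xc {X : (Fin d → ℝ) → ℝ} (hXc : Continuous X)
    (hXp : periodicT X) {D : ((Fin d → ℤ) → ℂ) → (Fin d → ℤ) → ℂ}
    (hD : ∀ a, l2Sq (D a) ≤ sobSq 1 a) :
    IsH1Bounded fun a b => pairC (convC (D a) (D b)) (E2Xc X) := by
  obtain ⟨F, -, hFE⟩ := exists_mFourierCoeff_eq_E2Xc hXc hXp
  let E : C(UnitAddTorus (Fin d), ℂ) := ⟨fun t => (Real.exp (2 * F t) : ℂ), by fun_prop⟩
  refine .of_enorm_sq_le (M := ‖E‖ₑ ^ 2) (by finiteness) fun a b ha hb => ?_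
  rw [hFE]
  refine (enorm_pairC_convC_mFourierCoeff_sq_le E (ne_top_of_le_ne_top ha (hD a))
    (ne_top_of_le_ne_top hb (hD b))).trans ?_
  gcongr <;> exact hD _

theorem isH1Bounded_pairC_convC_convC {r s : ℝ} (hs : 0 ≤ s) (hsr : s < r) (hs1 : s < 1)
    {z e : (Fin 2 → ℤ) → ℂ} (hz : sobSq (-s) z ≠ ∞) (he : sobSq r e ≠ ∞) :
    IsH1Bounded fun a b => pairC (convC a b) (convC z e) := by
  obtain ⟨t, ht, ht1⟩ := exists_between (max_lt hs1 (by linarith : 1 - (r - s) < 1))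
  obtain ⟨hst, hrt⟩ := max_lt_iff.mp ht
  obtain ⟨C, hC, h⟩ := exists_enorm_pairC_convC_convC_sq_le (d := 2) (s₁ := 1) (s₂ := 1) hs hst.le
    hsr.le ht1.le ht1.le (by norm_num; linarith) (by norm_num; linarith)
  exact .of_enorm_sq_le (by finiteness) fun a b _ _ => h a b z e

end Torus

theorem statement11_general {s σ : ℝ} (hs : 0 ≤ s) (hsσ : s < σ) (hs1 : s < 1)
    {X : (Fin 2 → ℝ) → ℝ} (hXc : Continuous X) (hXp : periodicT X)
    (hX : sobSq σ (coeffC fun x => (X x : ℂ)) ≠ ∞)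
    {Z : (Fin 2 → ℤ) → ℂ} (hZ : sobSq (-s) Z ≠ ∞) (c : ℝ) : IsH1Bounded (aForm X Z c) := by
  obtain ⟨r, hsr, hr⟩ := exists_between (lt_min hsσ hs1)
  have hE : sobSq r (E2Xc X) ≠ ∞ :=
    sobSq_E2Xc_ne_top hXc hXp (hs.trans hsr.le) hr (min_le_right _ _)
      (ne_top_of_le_ne_top hX (sobSq_mono _ (min_le_left _ _)))
  have gradient (j : Fin 2) :
      IsH1Bounded fun a b => pairC (convC (gradC j a) (gradC j b)) (E2Xc X) :=
    isH1Bounded_pairC_convC_E2Xc hXc hXp (l2Sq_gradC_le_sobSq_one j)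
  have potential : IsH1Bounded fun a b => pairC (convC a b) (convC Z (E2Xc X)) :=
    isH1Bounded_pairC_convC_convC hs hsr hs1 hZ hE
  have mass : IsH1Bounded fun a b => pairC (convC a b) (E2Xc X) :=
    isH1Bounded_pairC_convC_E2Xc hXc hXp l2Sq_le_sobSq_one
  exact ((IsH1Bounded.sum gradient).sub potential).add (mass.const_mul c)

/-- continuity of the Anderson form
`𝔞(u₁,u₂) = ∫∇v₁·∇v₂ e^{2X} - ⟨Z, v₁v₂e^{2X}⟩ + c∫v₁v₂e^{2X}`, `v_i = e^{-X}u_i`, on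
its domain `D(𝔞) = e^X H¹` with norm `‖u‖_𝔞² = ‖u‖_{L²}² + ‖e^{-X}u‖_{H¹}²`. -/
theorem statement11 (κ : ℝ) (hκ : 0 < κ) (hκ' : κ < 1/3)
    (X : (Fin 2 → ℝ) → ℝ) (hXc : Continuous X) (hXp : periodicT X)
    (hX : besovNorm (1 - κ) ∞ ∞ (coeffC fun x => (X x : ℂ)) ≠ ∞)
    (Z : (Fin 2 → ℤ) → ℂ) (hZ : besovNorm (-κ) ∞ ∞ Z ≠ ∞) (c : ℝ) :
    ∃ C : ℝ, 0 < C ∧ ∀ a₁ a₂ : (Fin 2 → ℤ) → ℂ,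
      anormSq X a₁ ≠ ∞ → anormSq X a₂ ≠ ∞ →
      ENNReal.ofReal ‖aForm X Z c a₁ a₂‖ ≤
        ENNReal.ofReal C * (anormSq X a₁) ^ ((1 : ℝ)/2) * (anormSq X a₂) ^ ((1 : ℝ)/2) := by
  have hXσ : sobSq (1 / 2) (coeffC fun x => (X x : ℂ)) ≠ ∞ :=
    sobSq_ne_top_of_besovNorm_ne_top (by linarith) le_top top_ne_zero hX
  have hZs : sobSq (-(1 / 3)) Z ≠ ∞ :=
    sobSq_ne_top_of_besovNorm_ne_top (by linarith) le_top top_ne_zero hZ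
  exact (statement11_general (by norm_num) (by norm_num) (by norm_num) hXc hXp hXσ hZs
    c).exists_le_anormSq X
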